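/- Let R be a field of characteristic zero, or of prime characteristic p > 2⌊m/2⌋, and let n ≥ 1. Then the ring M_n E^m does not satisfy the standard identity of degree k = 2(n + ⌊m/2⌋) − 1; that is, there exist matrices C₁,…,C_k ∈ M_n E^m with Σ_{π ∈ 𝔖_k} sign(π) C_{π(1)} ⋯ C_{π(k)} ≠ 0. -/

import Mathlib

/-!
Write `s` for the standard polynomial of the appropriate degree. If `x j * a = 0` for all `j`, then
`s(a, x₁, …, x_k) = a * s(x₁, …, x_k)`, as only the words that begin with `a` survive. Hence
putting the matrix units `E₀₀, E₀₁, E₁₁, E₁₂, …` in front of arguments supported at the last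
diagonal entry moves the value of `s` to the top right corner: every additional row provides two
more arguments. At the last diagonal entry we take `s(1, v₁, …, v_d)` with `d = 2⌊m/2⌋`; for even
`d` this is `s(v₁, …, v_d)`, and since the `vᵢ` anticommute all `d!` terms agree, giving
`d! v₁ ⋯ v_d`.
-/

/-- The standard polynomial `∑ π, sign π • x (π 0) * ⋯ * x (π (k - 1))` of degree `k` on an
`R`-algebra `A`, encoded as the alternatization of the `k`-fold product so that it comes with its
multilinearity and its sign rule. -/
noncomputable def standardPolynomial (R A : Type*) [CommSemiring R] [Ring A] [Algebra R A] (k : ℕ) :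
    A [⋀^Fin k]→ₗ[R] A :=
  MultilinearMap.alternatization (MultilinearMap.mkPiAlgebraFin R k A)

section StandardPolynomial

variable (R : Type*) {A : Type*} [CommSemiring R] [Ring A] [Algebra R A] {k : ℕ}

theorem standardPolynomial_apply (x : Fin k → A) :
    standardPolynomial R A k x =
      ∑ π : Equiv.Perm (Fin k), Equiv.Perm.sign π • (List.ofFn fun i => x (π i)).prod := by
  simp only [standardPolynomial, MultilinearMap.alternatization_apply,
    MultilinearMap.domDomCongr_apply, MultilinearMap.mkPiAlgebraFin_apply]

@[simp]
theorem standardPolynomial_zero (x : Fin 0 → A) : standardPolynomial R A 0 x = 1 := by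
  simp [standardPolynomial_apply]

theorem sign_smul_standardPolynomial_tail_comp_swap (i : Fin (k + 1)) (x : Fin (k + 1) → A) :
    (if i = 0 then 1 else -1 : ℤˣ) •
        standardPolynomial R A k (Fin.tail (x ∘ Equiv.swap 0 i)) =
      (-1) ^ (i : ℕ) • standardPolynomial R A k (i.removeNth x) := by
  cases i using Fin.cases with
  | zero => simp
  | succ i =>
    have tail_comp_swap : Fin.tail (x ∘ Equiv.swap 0 i.succ) =
        i.succ.removeNth x ∘ i.cycleRange := by
      funext j
      simp [Fin.tail, Fin.removeNth]
    rw [tail_comp_swap, AlternatingMap.map_perm, Fin.sign_cycleRange]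
    simp [Units.smul_def, pow_succ']

theorem standardPolynomial_succ (x : Fin (k + 1) → A) :
    standardPolynomial R A (k + 1) x =
      ∑ i : Fin (k + 1), (-1) ^ (i : ℕ) • (x i * standardPolynomial R A k (i.removeNth x)) := by
  rw [standardPolynomial_apply, ← Equiv.sum_comp Equiv.Perm.decomposeFin.symm,
    Fintype.sum_prod_type]
  refine Finset.sum_congr rfl fun i _ => ?_
  rw [← mul_smul_comm, ← sign_smul_standardPolynomial_tail_comp_swap, standardPolynomial_apply,
    Finset.smul_sum, Finset.mul_sum]
  refine Finset.sum_congr rfl fun e _ => ?_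
  simp only [List.ofFn_succ, List.prod_cons, Equiv.Perm.decomposeFin_symm_apply_zero,
    Equiv.Perm.decomposeFin_symm_apply_succ, Equiv.Perm.decomposeFin.symm_sign, mul_smul,
    mul_smul_comm, Fin.tail, Function.comp_apply]

theorem standardPolynomial_cons (a : A) (x : Fin (k + 1) → A) :
    standardPolynomial R A (k + 2) (Fin.cons a x) = a * standardPolynomial R A (k + 1) x -
      ∑ i : Fin (k + 1), (-1) ^ (i : ℕ) •
        (x i * standardPolynomial R A (k + 1) (Fin.cons a (i.removeNth x))) := by
  have removeNth_succ_cons (i : Fin (k + 1)) :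
      i.succ.removeNth (Fin.cons a x : Fin (k + 2) → A) = Fin.cons a (i.removeNth x) :=
    Fin.cons_comp_succ_succAbove a x i
  rw [standardPolynomial_succ, Fin.sum_univ_succ]
  simp [removeNth_succ_cons, pow_succ', sub_eq_add_neg]

theorem standardPolynomial_cons_of_mul_eq_zero {a : A} {x : Fin k → A} (h : ∀ i, x i * a = 0) :
    standardPolynomial R A (k + 1) (Fin.cons a x) = a * standardPolynomial R A k x := by
  induction k with
  | zero => simp [standardPolynomial_succ]
  | succ k ih =>
    rw [standardPolynomial_cons, sub_eq_self]
    refine Finset.sum_eq_zero fun i _ => ?_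
    rw [ih (x := i.removeNth x) fun j => h _, ← mul_assoc, h, zero_mul, smul_zero]

theorem standardPolynomial_cons_one (x : Fin k → A) :
    standardPolynomial R A (k + 1) (Fin.cons 1 x) =
      if Even k then standardPolynomial R A k x else 0 := by
  induction k with
  | zero => simp [standardPolynomial_succ]
  | succ k ih =>
    by_cases hk : Even k <;>
      simp [standardPolynomial_cons, ih, Nat.even_add_one, hk, standardPolynomial_succ R x]

end StandardPolynomial

section Staircase

open Matrix

variable {ι A : Type*} [Fintype ι] [DecidableEq ι] [Ring A] {k : ℕ}

theorem standardPolynomial_single (R : Type*) [CommSemiring R] [Algebra R A] (l : ι)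
    (x : Fin (k + 1) → A) :
    standardPolynomial R (Matrix ι ι A) (k + 1) (fun i => single l l (x i)) =
      single l l (standardPolynomial R A (k + 1) x) := by
  induction k with
  | zero => simp [standardPolynomial_succ]
  | succ k ih =>
    have removeNth_single (i : Fin (k + 2)) :
        i.removeNth (fun j => single l l (x j)) = fun j => single l l (i.removeNth x j) := rfl
    rw [standardPolynomial_succ, standardPolynomial_succ R x, ← singleAddMonoidHom_apply, map_sum]
    simp only [removeNth_single, ih, single_mul_single_same, map_zsmul, singleAddMonoidHom_apply]

/-- Along a path `p` of length `t` in the index type, the `2t` matrix units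
`E_{p₀p₀}, E_{p₀p₁}, E_{p₁p₁}, E_{p₁p₂}, …, E_{p_{t-1}p_t}`, followed by the elements of `x`
placed at the diagonal entry of the endpoint `p_t`. -/
def staircase (x : Fin k → A) : (t : ℕ) → (Fin (t + 1) → ι) → Fin (k + 2 * t) → Matrix ι ι A
  | 0, p => fun j => single (p 0) (p 0) (x j)
  | t + 1, p => Fin.cons (single (p 0) (p 0) 1)
      (Fin.cons (single (p 0) (p 1) 1) (staircase x t (Fin.tail p)) : Fin (k + 2 * t + 1) → _)

theorem staircase_mul_single (x : Fin k → A) {t : ℕ} {p : Fin (t + 1) → ι} {i : ι}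
    (hi : ∀ s, p s ≠ i) (j : Fin (k + 2 * t)) (l : ι) (a : A) :
    staircase x t p j * single i l a = 0 := by
  induction t with
  | zero => exact single_mul_single_of_ne _ _ _ _ (hi 0) _
  | succ t ih =>
    refine Fin.cases ?_ (Fin.cases ?_ fun j => ?_) j
    · exact single_mul_single_of_ne _ _ _ _ (hi 0) _
    · exact single_mul_single_of_ne _ _ _ _ (hi 1) _
    · exact ih (p := Fin.tail p) (fun s => hi s.succ) j

theorem standardPolynomial_staircase (R : Type*) [CommSemiring R] [Algebra R A]
    (x : Fin (k + 1) → A) {t : ℕ} {p : Fin (t + 1) → ι} (hp : Function.Injective p) :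
    standardPolynomial R (Matrix ι ι A) (k + 1 + 2 * t) (staircase x t p) =
      single (p 0) (p (Fin.last t)) (standardPolynomial R A (k + 1) x) := by
  induction t with
  | zero => exact standardPolynomial_single R (p 0) x
  | succ t ih =>
    have mul_single_zero (j) (l : ι) :
        staircase x t (Fin.tail p) j * single (p 0) l 1 = 0 :=
      staircase_mul_single x (fun s => hp.ne s.succ_ne_zero) j l 1
    have edge_mul_vertex : single (p 0) (p 1) (1 : A) * single (p 0) (p 0) 1 = 0 :=
      single_mul_single_of_ne _ _ _ _ (hp.ne (Fin.succ_ne_zero 0)) _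
    calc standardPolynomial R (Matrix ι ι A) (k + 1 + 2 * t + 2) (staircase x (t + 1) p)
      _ = single (p 0) (p 0) 1 * (single (p 0) (p 1) 1 *
            standardPolynomial R (Matrix ι ι A) (k + 1 + 2 * t) (staircase x t (Fin.tail p))) := by
        rw [staircase, standardPolynomial_cons_of_mul_eq_zero R
            (Fin.cases edge_mul_vertex fun j => mul_single_zero j (p 0)),
          standardPolynomial_cons_of_mul_eq_zero R fun j => mul_single_zero j (p 1)]
      _ = single (p 0) (p (Fin.last (t + 1))) (standardPolynomial R A (k + 1) x) := by
        rw [ih (p := Fin.tail p) (hp.comp (Fin.succ_injective _))]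
        simp [Fin.tail]

end Staircase

section ExteriorAlgebra

variable {R M : Type*} [CommRing R] [AddCommGroup M] [Module R M] {d : ℕ}

theorem standardPolynomial_ι (v : Fin d → M) :
    standardPolynomial R (ExteriorAlgebra R M) d (fun i => ExteriorAlgebra.ι R (v i)) =
      d.factorial • ExteriorAlgebra.ιMulti R d v := by
  have prod_perm (π : Equiv.Perm (Fin d)) :
      (List.ofFn fun i => ExteriorAlgebra.ι R (v (π i))).prod =
        Equiv.Perm.sign π • ExteriorAlgebra.ιMulti R d v := by
    rw [← AlternatingMap.map_perm, ExteriorAlgebra.ιMulti_apply]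
    rfl
  simp [standardPolynomial_apply, prod_perm, smul_smul, Fintype.card_perm]

theorem smul_ιMulti_basis_eq_zero_iff {I : Type*} [LinearOrder I] (b : Module.Basis I R M)
    (f : Fin d ↪o I) {c : R} : c • ExteriorAlgebra.ιMulti R d (b ∘ f) = 0 ↔ c = 0 := by
  refine ⟨fun h => ?_, fun h => by rw [h, zero_smul]⟩
  have smul_eq_zero_in_power : c • exteriorPower.ιMulti R d (b ∘ f) = 0 := Subtype.ext h
  have pairing_eq_one := exteriorPower.pairingDual_apply_apply_eq_one b b.coord (by simp)
    (fun i j hij => by simp [hij.symm]) d f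
  simpa [pairing_eq_one] using congrArg
    (exteriorPower.pairingDual R M d (exteriorPower.ιMulti R d (b.coord ∘ f)))
    smul_eq_zero_in_power

end ExteriorAlgebra

theorem natCast_factorial_ne_zero_of_charZero_or_lt_charP {R : Type*} [Ring R] [Nontrivial R]
    {d : ℕ} (h : CharZero R ∨ ∃ p : ℕ, p.Prime ∧ CharP R p ∧ d < p) :
    (d.factorial : R) ≠ 0 := by
  rcases h with _ | ⟨p, hp, _, hd⟩
  · exact Nat.cast_ne_zero.2 d.factorial_ne_zero
  · have : Fact p.Prime := ⟨hp⟩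
    exact ((IsUnit.natCast_factorial_iff_of_charP p).2 hd).ne_zero

theorem grassmann_matrix_no_standard_identity_general
    (R : Type*) [CommRing R] (m n : ℕ) (hn : 1 ≤ n)
    (hfac : ((2 * (m / 2)).factorial : R) ≠ 0)
    (k : ℕ) (hk : k = 2 * (n + m / 2) - 1) :
    ∃ C : Fin k → Matrix (Fin n) (Fin n) (ExteriorAlgebra R (Fin m → R)),
      ∑ π : Equiv.Perm (Fin k),
        (Equiv.Perm.sign π : ℤ) • (List.ofFn fun i => C (π i)).prod ≠ 0 := by
  obtain ⟨t, rfl⟩ := Nat.exists_eq_add_of_le' hn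
  obtain rfl : k = 2 * (m / 2) + 1 + 2 * t := by omega
  let v := Pi.basisFun R (Fin m) ∘ Fin.castLEOrderEmb (Nat.mul_div_le m 2)
  let x : Fin (2 * (m / 2) + 1) → ExteriorAlgebra R (Fin m → R) :=
    Fin.cons 1 fun i => ExteriorAlgebra.ι R (v i)
  have value_ne_zero : standardPolynomial R _ _ x ≠ 0 := by
    rw [standardPolynomial_cons_one, if_pos (even_two_mul _), standardPolynomial_ι,
      ← Nat.cast_smul_eq_nsmul R]
    exact mt (smul_ιMulti_basis_eq_zero_iff _ _).1 hfac
  refine ⟨staircase x t id, fun h => value_ne_zero ?_⟩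
  have staircase_value := standardPolynomial_staircase R x (p := id (α := Fin (t + 1)))
    Function.injective_id
  rw [standardPolynomial_apply] at staircase_value
  simpa using congrFun₂ (staircase_value.symm.trans h) 0 (Fin.last t)

/-- Over a field of characteristic zero or of prime characteristic `p > 2⌊m/2⌋`, the
ring of `n × n` matrices over the Grassmann algebra of rank `m` does not satisfy the
standard identity of degree `k = 2(n + ⌊m/2⌋) − 1`. -/
theorem grassmann_matrix_no_standard_identity
    (R : Type*) [Field R] (m n : ℕ) (hn : 1 ≤ n)
    (hchar : CharZero R ∨ ∃ p : ℕ, p.Prime ∧ CharP R p ∧ 2 * (m / 2) < p)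
    (k : ℕ) (hk : k = 2 * (n + m / 2) - 1) :
    ∃ C : Fin k → Matrix (Fin n) (Fin n) (ExteriorAlgebra R (Fin m → R)),
      ∑ π : Equiv.Perm (Fin k),
        (Equiv.Perm.sign π : ℤ) • (List.ofFn fun i => C (π i)).prod ≠ 0 :=
  grassmann_matrix_no_standard_identity_general R m n hn
    (natCast_factorial_ne_zero_of_charZero_or_lt_charP hchar) k hk
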